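/- Let K be a positive semiring, let U be a finite set of attributes each of whose domains has at least two elements, let F be a set of functional dependencies between subsets of U, and let X and Y be subsets of U with X ∪ Y = U. The following statements are equivalent: (a) F logically implies X ∩ Y → X ∖ Y or F logically implies X ∩ Y → Y ∖ X; (b) for every K-relation R over U whose support R' satisfies every functional dependency in F, the decomposition of R along X and Y is lossless-join, i.e., R ≡ R[X] ⋈ R[Y]. -/

import Mathlib

open Finsupp

variable {A : Type*} [DecidableEq A]

/-- An `X`-tuple: a function assigning to each attribute `a ∈ X` an element of its domain. -/
def Tup (dom : A → Type*) (X : Finset A) : Type _ := ∀ a ∈ X, dom a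

/-- Projection (restriction) of an `X`-tuple to `Y ⊆ X`. -/
def restr (dom : A → Type*) {X Y : Finset A} (h : Y ⊆ X) (t : Tup dom X) : Tup dom Y :=
  fun a ha => t a (h ha)

/-- The marginal `R[Y]` of a `K`-relation `R` over `X`, for `Y ⊆ X`. -/
noncomputable def marg {dom : A → Type*} {K : Type*} [AddCommMonoid K] {X Y : Finset A}
    (h : Y ⊆ X) (R : Tup dom X →₀ K) : Tup dom Y →₀ K :=
  Finsupp.mapDomain (restr dom h) R

/-- Equivalence up to normalization of two `K`-relations over the same attribute set. -/
def KEquiv {dom : A → Type*} {K : Type*} [MulZeroClass K] {X : Finset A}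
    (R S : Tup dom X →₀ K) : Prop :=
  ∃ a b : K, a ≠ 0 ∧ b ≠ 0 ∧ ∀ t, a * R t = b * S t

/-- Merge an `X`-tuple and a `Y`-tuple into an `X ∪ Y`-tuple (values from the first argument
on `X`). -/
def merge {dom : A → Type*} {X Y : Finset A} (r : Tup dom X) (s : Tup dom Y) :
    Tup dom (X ∪ Y) :=
  fun a ha => if h : a ∈ X then r a h else s a ((Finset.mem_union.mp ha).resolve_left h)

/-- The correcting factor `c_S(u) = ∏_{v ∈ S[Z]', v ≠ u} S[Z](v)`. -/
noncomputable def cFactor {dom : A → Type*} {K : Type*} [CommSemiring K] {Y Z : Finset A}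
    (h : Z ⊆ Y) (S : Tup dom Y →₀ K) (u : Tup dom Z) : K :=
  haveI := Classical.decEq (Tup dom Z)
  ∏ v ∈ (marg h S).support.erase u, (marg h S) v

/-- The join of a `K`-relation over `X` and a `K`-relation over `Y`:
`(R ⋈ S)(t) = R(t[X])·S(t[Y])·c_S(t[X ∩ Y])`. -/
noncomputable def kjoin {dom : A → Type*} {K : Type*} [CommSemiring K] {X Y : Finset A}
    (R : Tup dom X →₀ K) (S : Tup dom Y →₀ K) : Tup dom (X ∪ Y) →₀ K :=
  haveI := Classical.decEq (Tup dom (X ∪ Y))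
  Finsupp.onFinset ((R.support ×ˢ S.support).image fun p => merge p.1 p.2)
    (fun t => R (restr dom Finset.subset_union_left t) *
      S (restr dom Finset.subset_union_right t) *
      cFactor Finset.inter_subset_right S (restr dom Finset.inter_subset_union t))
    (by
      intro t ht
      have hR : R (restr dom Finset.subset_union_left t) ≠ 0 :=
        left_ne_zero_of_mul (left_ne_zero_of_mul ht)
      have hS : S (restr dom Finset.subset_union_right t) ≠ 0 :=
        right_ne_zero_of_mul (left_ne_zero_of_mul ht)
      refine Finset.mem_image.mpr ⟨(restr dom Finset.subset_union_left t,
        restr dom Finset.subset_union_right t),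
        Finset.mem_product.mpr ⟨Finsupp.mem_support_iff.mpr hR, Finsupp.mem_support_iff.mpr hS⟩,
        ?_⟩
      funext a ha
      by_cases h : a ∈ X <;> simp [merge, restr, h])

/-- Two `K`-relations (over possibly different attribute sets) are consistent if a single
`K`-relation over the union has marginals equivalent to each of them. -/
def Consistent {dom : A → Type*} {K : Type*} [CommSemiring K] {X Y : Finset A}
    (R : Tup dom X →₀ K) (S : Tup dom Y →₀ K) : Prop :=
  ∃ T : Tup dom (X ∪ Y) →₀ K,
    KEquiv (marg Finset.subset_union_left T) R ∧ KEquiv (marg Finset.subset_union_right T) S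


/-- Two tuples over `U` agree on all attributes in `V`. -/
def agreeOn {A : Type*} [DecidableEq A] {dom : A → Type*} {U : Finset A} (V : Finset A)
    (t₁ t₂ : Tup dom U) : Prop :=
  ∀ a (ha : a ∈ U), a ∈ V → t₁ a ha = t₂ a ha

/-- An ordinary relation (a set of `U`-tuples) satisfies the functional dependency `V → W`
if any two of its tuples that agree on `V` also agree on `W`. -/
def SatisfiesFD {A : Type*} [DecidableEq A] {dom : A → Type*} {U : Finset A}
    (P : Finset (Tup dom U)) (V W : Finset A) : Prop :=
  ∀ t₁ ∈ P, ∀ t₂ ∈ P, agreeOn V t₁ t₂ → agreeOn W t₁ t₂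


/-!
Write `Z = X ∩ Y`. If `Z → X` holds in the support of `R`, then `R[X](t[X]) · R[Y](t[Y])` equals
`R(t) · R[Z](t[Z])`: tuples agreeing with `t` on `Y` agree with it everywhere, and those agreeing
on `Z` agree on `X`. Multiplying by the correcting factor turns `R[Z](t[Z])` into the product of
all nonzero values of `R[Z]`, a constant independent of `t`.

Conversely, a positive semiring does not let sums or products of nonzero elements vanish, so a
lossless support contains, with any `t₁` and `t₂` agreeing on `Z`, the tuple that is `t₁` on `X` and
`t₂` on `Y`. Apply this to a two-element relation whose tuples agree exactly on the attributes
determined by `Z`: the merged tuple is one of the two, so they agree on `X` or on `Y`.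
-/

section

variable {dom : A → Type*} {K : Type*} {U V W X Y Z : Finset A}

/-- Logical implication `F ⊨ V → W` between functional dependencies for relations over `U`.
Satisfaction only compares attributes in `U`, so dependencies in `F` act through their traces
on `U`. -/
def FDImplies (dom : A → Type*) (U : Finset A) (F : Set (Finset A × Finset A))
    (V W : Finset A) : Prop :=
  ∀ P : Finset (Tup dom U), (∀ fd ∈ F, SatisfiesFD P fd.1 fd.2) → SatisfiesFD P V W

/-- The decomposition of `R` along `X` and `Y` is lossless-join: `R ≡ R[X] ⋈ R[Y]`. The attribute
sets `X` and `Y` are read off from the type of `R`. -/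
def LosslessJoin [CommSemiring K] (R : Tup dom (X ∪ Y) →₀ K) : Prop :=
  KEquiv R (kjoin (marg Finset.subset_union_left R) (marg Finset.subset_union_right R))

theorem exists_finsupp_support_eq (K : Type*) [Zero K] [Nontrivial K] {α : Type*}
    (s : Finset α) : ∃ f : α →₀ K, f.support = s := by
  classical
  obtain ⟨c, hc⟩ := exists_ne (0 : K)
  refine ⟨Finsupp.indicator s fun _ _ => c, ?_⟩
  ext a
  simp [Finsupp.indicator_apply, hc]

theorem agreeOn.refl (V : Finset A) (t : Tup dom U) : agreeOn V t t :=
  fun _ _ _ => rfl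

theorem agreeOn.symm {t₁ t₂ : Tup dom U} (h : agreeOn V t₁ t₂) : agreeOn V t₂ t₁ :=
  fun a ha haV => (h a ha haV).symm

theorem agreeOn.trans {t₁ t₂ t₃ : Tup dom U} (h₁₂ : agreeOn V t₁ t₂) (h₂₃ : agreeOn V t₂ t₃) :
    agreeOn V t₁ t₃ :=
  fun a ha haV => (h₁₂ a ha haV).trans (h₂₃ a ha haV)

theorem agreeOn.mono (hVW : V ⊆ W) {t₁ t₂ : Tup dom U} (h : agreeOn W t₁ t₂) :
    agreeOn V t₁ t₂ :=
  fun a ha haV => h a ha (hVW haV)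

theorem agreeOn.eq_of_subset_union (hU : U ⊆ V ∪ W) {t₁ t₂ : Tup dom U}
    (hV : agreeOn V t₁ t₂) (hW : agreeOn W t₁ t₂) : t₁ = t₂ :=
  funext₂ fun a ha => (Finset.mem_union.mp (hU ha)).elim (hV a ha) (hW a ha)

theorem restr_eq_restr_iff (h : V ⊆ U) {t₁ t₂ : Tup dom U} :
    restr dom h t₁ = restr dom h t₂ ↔ agreeOn V t₁ t₂ :=
  ⟨fun e a _ haV => congrFun₂ e a haV, fun e => funext₂ fun a haV => e a (h haV) haV⟩

theorem restr_merge_left (r : Tup dom X) (s : Tup dom Y) :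
    restr dom Finset.subset_union_left (merge r s) = r :=
  funext₂ fun _ ha => dif_pos ha

theorem restr_merge_right {t₁ t₂ : Tup dom (X ∪ Y)} (h : agreeOn (X ∩ Y) t₁ t₂) :
    restr dom Finset.subset_union_right
      (merge (restr dom Finset.subset_union_left t₁) (restr dom Finset.subset_union_right t₂)) =
    restr dom (Finset.subset_union_right : Y ⊆ X ∪ Y) t₂ := by
  funext a haY
  by_cases haX : a ∈ X
  · exact (dif_pos haX).trans (h a _ (Finset.mem_inter.mpr ⟨haX, haY⟩))
  · exact dif_neg haX

theorem SatisfiesFD.of_sdiff {P : Finset (Tup dom U)} (h : SatisfiesFD P V (W \ V)) :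
    SatisfiesFD P V W := by
  intro t₁ h₁ t₂ h₂ hV a ha haW
  by_cases haV : a ∈ V
  · exact hV a ha haV
  · exact h t₁ h₁ t₂ h₂ hV a ha (Finset.mem_sdiff.mpr ⟨haW, haV⟩)

theorem satisfiesFD_pair [DecidableEq (Tup dom U)] {t₁ t₂ : Tup dom U}
    (h : agreeOn V t₁ t₂ → agreeOn W t₁ t₂) : SatisfiesFD {t₁, t₂} V W := by
  intro r hr s hs hrs
  rw [Finset.mem_insert, Finset.mem_singleton] at hr hs
  rcases hr with rfl | rfl <;> rcases hs with rfl | rfl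
  · exact .refl _ _
  · exact h hrs
  · exact (h hrs.symm).symm
  · exact .refl _ _

theorem FDImplies.trans_mem {F : Set (Finset A × Finset A)} {fd : Finset A × Finset A}
    (hfd : fd ∈ F) (h : FDImplies dom U F V fd.1) : FDImplies dom U F V fd.2 :=
  fun P hP t₁ h₁ t₂ h₂ hV => hP fd hfd t₁ h₁ t₂ h₂ (h P hP t₁ h₁ t₂ h₂ hV)

theorem fdImplies_iff_forall_singleton {F : Set (Finset A × Finset A)} :
    FDImplies dom U F V W ↔ ∀ a ∈ U, a ∈ W → FDImplies dom U F V {a} := by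
  constructor
  · intro h a _ haW P hP t₁ h₁ t₂ h₂ hV
    exact (h P hP t₁ h₁ t₂ h₂ hV).mono (Finset.singleton_subset_iff.mpr haW)
  · intro h P hP t₁ h₁ t₂ h₂ hV a ha haW
    exact h a ha haW P hP t₁ h₁ t₂ h₂ hV a ha (Finset.mem_singleton_self a)

theorem exists_eq_iff_fdImplies_singleton (t₀ : Tup dom U) (F : Set (Finset A × Finset A))
    (V : Finset A) {a : A} (ha : a ∈ U) :
    ∃ p q : dom a, p = q ↔ FDImplies dom U F V {a} := by
  by_cases h : FDImplies dom U F V {a}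
  · exact ⟨t₀ a ha, t₀ a ha, iff_of_true rfl h⟩
  · -- The two tuples of a counterexample to `V → a` differ at `a`.
    have hcounter := h
    simp only [FDImplies, SatisfiesFD, agreeOn, not_forall, Finset.mem_singleton] at hcounter
    obtain ⟨_, _, t₁, _, t₂, _, _, _, ha, rfl, hne⟩ := hcounter
    exact ⟨t₁ _ ha, t₂ _ ha, iff_of_false hne h⟩

theorem exists_pair_agreeOn_iff_fdImplies [Nonempty (Tup dom U)] (F : Set (Finset A × Finset A))
    (V : Finset A) :
    ∃ t₁ t₂ : Tup dom U, ∀ W, agreeOn W t₁ t₂ ↔ FDImplies dom U F V W := by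
  obtain ⟨t₀⟩ := ‹Nonempty (Tup dom U)›
  choose t₁ t₂ ht using fun a (ha : a ∈ U) => exists_eq_iff_fdImplies_singleton t₀ F V ha
  refine ⟨t₁, t₂, fun W => ?_⟩
  rw [fdImplies_iff_forall_singleton]
  exact forall₂_congr fun a ha => imp_congr_right fun _ => ht a ha

theorem agreeOn_or_agreeOn_of_merge_mem_pair [DecidableEq (Tup dom (X ∪ Y))]
    {t₁ t₂ : Tup dom (X ∪ Y)} (h : agreeOn (X ∩ Y) t₁ t₂)
    (hmem : merge (restr dom Finset.subset_union_left t₁)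
      (restr dom Finset.subset_union_right t₂) ∈ ({t₁, t₂} : Finset (Tup dom (X ∪ Y)))) :
    agreeOn X t₁ t₂ ∨ agreeOn Y t₁ t₂ := by
  rcases Finset.mem_insert.mp hmem with heq | heq
  · right
    rw [← restr_eq_restr_iff Finset.subset_union_right, ← restr_merge_right h, heq]
  · left
    rw [← restr_eq_restr_iff Finset.subset_union_left, ← Finset.mem_singleton.mp heq,
      restr_merge_left]

theorem fdImplies_or_fdImplies_of_merge_mem {F : Set (Finset A × Finset A)}
    (h : ∀ P : Finset (Tup dom (X ∪ Y)), (∀ fd ∈ F, SatisfiesFD P fd.1 fd.2) →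
      ∀ t₁ ∈ P, ∀ t₂ ∈ P, agreeOn (X ∩ Y) t₁ t₂ →
        merge (restr dom Finset.subset_union_left t₁)
          (restr dom Finset.subset_union_right t₂) ∈ P) :
    FDImplies dom (X ∪ Y) F (X ∩ Y) (X \ Y) ∨ FDImplies dom (X ∪ Y) F (X ∩ Y) (Y \ X) := by
  classical
  rcases isEmpty_or_nonempty (Tup dom (X ∪ Y))
  · exact .inl fun _ _ t₁ => isEmptyElim t₁
  obtain ⟨t₁, t₂, ht⟩ := exists_pair_agreeOn_iff_fdImplies (dom := dom) (U := X ∪ Y) F (X ∩ Y)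
  have hpair : ∀ fd ∈ F, SatisfiesFD {t₁, t₂} fd.1 fd.2 := fun fd hfd =>
    satisfiesFD_pair fun hV => (ht _).mpr (((ht _).mp hV).trans_mem hfd)
  have hZ : agreeOn (X ∩ Y) t₁ t₂ := (ht _).mpr fun _ _ _ _ _ _ => id
  have hmerge := h _ hpair t₁ (Finset.mem_insert_self _ _) t₂
    (Finset.mem_insert_of_mem (Finset.mem_singleton_self _)) hZ
  exact (agreeOn_or_agreeOn_of_merge_mem_pair hZ hmerge).imp
    (fun hX => (ht _).mp (hX.mono Finset.sdiff_subset))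
    (fun hY => (ht _).mp (hY.mono Finset.sdiff_subset))

section Marginal

variable [AddCommMonoid K]

omit [DecidableEq A] in
theorem marg_marg (hXU : X ⊆ U) (hZX : Z ⊆ X) (R : Tup dom U →₀ K) :
    marg hZX (marg hXU R) = marg (hZX.trans hXU) R :=
  Finsupp.mapDomain_comp.symm

open scoped Classical in
theorem marg_restr (h : V ⊆ U) (R : Tup dom U →₀ K) (t : Tup dom U) :
    marg h R (restr dom h t) = ∑ r ∈ R.support with agreeOn V r t, R r := by
  simp only [marg, Finsupp.mapDomain_apply_eq_sum, restr_eq_restr_iff]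

theorem marg_restr_congr (hV : V ⊆ U) (hW : W ⊆ U) {R : Tup dom U →₀ K} {t : Tup dom U}
    (h : ∀ r ∈ R.support, agreeOn V r t ↔ agreeOn W r t) :
    marg hV R (restr dom hV t) = marg hW R (restr dom hW t) := by
  classical
  rw [marg_restr, marg_restr, Finset.filter_congr h]

theorem marg_restr_eq_self (h : V ⊆ U) {R : Tup dom U →₀ K} {t : Tup dom U}
    (ht : ∀ r ∈ R.support, agreeOn V r t → r = t) : marg h R (restr dom h t) = R t := by
  have hid : marg subset_rfl R = R := Finsupp.mapDomain_id
  calc marg h R (restr dom h t) = marg subset_rfl R (restr dom subset_rfl t) :=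
        marg_restr_congr h subset_rfl fun r hr =>
          ⟨fun hrt => by rw [ht r hr hrt]; exact .refl _ _, agreeOn.mono h⟩
    _ = R t := congrArg (· t) hid

theorem marg_restr_eq_zero (h : V ⊆ U) {R : Tup dom U →₀ K} {t : Tup dom U}
    (ht : ∀ r ∈ R.support, ¬ agreeOn V r t) : marg h R (restr dom h t) = 0 := by
  classical
  rw [marg_restr, Finset.filter_false_of_mem ht, Finset.sum_empty]

omit [DecidableEq A] in
theorem marg_restr_ne_zero [Subsingleton (AddUnits K)] (h : V ⊆ U) {R : Tup dom U →₀ K}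
    {t : Tup dom U} (ht : t ∈ R.support) : marg h R (restr dom h t) ≠ 0 := by
  classical
  rw [← Finsupp.mem_support_iff, marg, Finsupp.mapDomain_support_of_subsingletonAddUnits]
  exact Finset.mem_image_of_mem _ ht

end Marginal

section Join

variable [CommSemiring K]

theorem marg_mul_marg_of_satisfiesFD (hXU : X ⊆ U) (hYU : Y ⊆ U) (hU : U ⊆ X ∪ Y) (hZX : Z ⊆ X)
    (hZY : Z ⊆ Y) {R : Tup dom U →₀ K} (hfd : SatisfiesFD R.support Z X) (t : Tup dom U) :
    marg hXU R (restr dom hXU t) * marg hYU R (restr dom hYU t) =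
      R t * marg (hZX.trans hXU) R (restr dom (hZX.trans hXU) t) := by
  by_cases hX : ∃ s ∈ R.support, agreeOn X s t
  · obtain ⟨s, hs, hst⟩ := hX
    have hZ_to_X : ∀ r ∈ R.support, agreeOn Z r t → agreeOn X r t := fun r hr hrt =>
      (hfd r hr s hs (hrt.trans (hst.mono hZX).symm)).trans hst
    have hY_to_eq : ∀ r ∈ R.support, agreeOn Y r t → r = t := fun r hr hrt =>
      (hZ_to_X r hr (hrt.mono hZY)).eq_of_subset_union hU hrt
    rw [marg_restr_eq_self hYU hY_to_eq, mul_comm,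
      marg_restr_congr hXU (hZX.trans hXU) fun r hr => ⟨agreeOn.mono hZX, hZ_to_X r hr⟩]
  · push Not at hX
    have ht : R t = 0 := Finsupp.notMem_support_iff.mp fun ht => hX t ht (.refl _ _)
    rw [marg_restr_eq_zero hXU hX, ht, zero_mul, zero_mul]

theorem kjoin_apply (R : Tup dom X →₀ K) (S : Tup dom Y →₀ K) (t : Tup dom (X ∪ Y)) :
    kjoin R S t = R (restr dom Finset.subset_union_left t) *
      S (restr dom Finset.subset_union_right t) *
      cFactor Finset.inter_subset_right S (restr dom Finset.inter_subset_union t) :=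
  rfl

omit [DecidableEq A] in
theorem marg_mul_cFactor (h : Z ⊆ Y) {S : Tup dom Y →₀ K} {u : Tup dom Z}
    (hu : marg h S u ≠ 0) :
    marg h S u * cFactor h S u = ∏ v ∈ (marg h S).support, marg h S v := by
  classical
  rw [← Finset.mul_prod_erase _ (marg h S) (Finsupp.mem_support_iff.mpr hu), cFactor]

variable [Nontrivial K] [NoZeroDivisors K]

omit [DecidableEq A] in
theorem cFactor_ne_zero (h : Z ⊆ Y) (S : Tup dom Y →₀ K) (u : Tup dom Z) : cFactor h S u ≠ 0 := by
  classical
  exact Finset.prod_ne_zero_iff.mpr fun _ hv =>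
    Finsupp.mem_support_iff.mp (Finset.mem_of_mem_erase hv)

variable [Subsingleton (AddUnits K)]

theorem losslessJoin_of_satisfiesFD {R : Tup dom (X ∪ Y) →₀ K}
    (hfd : SatisfiesFD R.support (X ∩ Y) X ∨ SatisfiesFD R.support (X ∩ Y) Y) :
    LosslessJoin R := by
  have hmul (t : Tup dom (X ∪ Y)) :
      marg Finset.subset_union_left R (restr dom Finset.subset_union_left t) *
          marg Finset.subset_union_right R (restr dom Finset.subset_union_right t) =
        R t * marg Finset.inter_subset_union R (restr dom Finset.inter_subset_union t) := by
    rcases hfd with hX | hY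
    · exact marg_mul_marg_of_satisfiesFD _ _ subset_rfl Finset.inter_subset_left
        Finset.inter_subset_right hX t
    · rw [mul_comm]
      exact marg_mul_marg_of_satisfiesFD _ _ (Finset.union_comm X Y).subset
        Finset.inter_subset_right Finset.inter_subset_left hY t
  let S : Tup dom (X ∩ Y) →₀ K :=
    marg Finset.inter_subset_right (marg (Finset.subset_union_right : Y ⊆ X ∪ Y) R)
  refine ⟨∏ v ∈ S.support, S v, 1,
    Finset.prod_ne_zero_iff.mpr fun _ => Finsupp.mem_support_iff.mp, one_ne_zero, fun t => ?_⟩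
  rw [one_mul, kjoin_apply, hmul, mul_assoc]
  by_cases ht : R t = 0
  · rw [ht, mul_zero, zero_mul]
  · have hZ := marg_restr_ne_zero Finset.inter_subset_union (Finsupp.mem_support_iff.mpr ht)
    rw [← marg_marg Finset.subset_union_right Finset.inter_subset_right] at hZ ⊢
    rw [marg_mul_cFactor _ hZ, mul_comm]

theorem LosslessJoin.merge_mem_support {R : Tup dom (X ∪ Y) →₀ K} (hR : LosslessJoin R)
    {t₁ t₂ : Tup dom (X ∪ Y)} (h₁ : t₁ ∈ R.support) (h₂ : t₂ ∈ R.support)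
    (h : agreeOn (X ∩ Y) t₁ t₂) :
    merge (restr dom Finset.subset_union_left t₁) (restr dom Finset.subset_union_right t₂) ∈
      R.support := by
  obtain ⟨a, b, -, hb, hab⟩ := hR
  refine Finsupp.mem_support_iff.mpr (right_ne_zero_of_mul (a := a) ?_)
  rw [hab, kjoin_apply, restr_merge_left, restr_merge_right h]
  exact mul_ne_zero hb <| mul_ne_zero
    (mul_ne_zero (marg_restr_ne_zero _ h₁) (marg_restr_ne_zero _ h₂)) (cFactor_ne_zero _ _ _)

end Join

theorem statement11_general [CommSemiring K] [Nontrivial K] [NoZeroDivisors K]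
    (hplus : ∀ a b : K, a + b = 0 → a = 0 ∧ b = 0) (X Y : Finset A)
    (F : Set (Finset A × Finset A)) :
    (FDImplies dom (X ∪ Y) F (X ∩ Y) (X \ Y) ∨ FDImplies dom (X ∪ Y) F (X ∩ Y) (Y \ X)) ↔
      ∀ R : Tup dom (X ∪ Y) →₀ K, (∀ fd ∈ F, SatisfiesFD R.support fd.1 fd.2) →
        LosslessJoin R := by
  have : Subsingleton (AddUnits K) :=
    ⟨fun a b => AddUnits.ext <| by
      rw [(hplus _ _ a.add_neg).1, (hplus _ _ b.add_neg).1]⟩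
  constructor
  · intro h R hR
    refine losslessJoin_of_satisfiesFD (h.imp (fun hX => .of_sdiff ?_) fun hY => .of_sdiff ?_)
    · rw [Finset.sdiff_inter_self_left]
      exact hX _ hR
    · rw [Finset.sdiff_inter_self_right]
      exact hY _ hR
  · intro h
    refine fdImplies_or_fdImplies_of_merge_mem fun P hP t₁ h₁ t₂ h₂ hZ => ?_
    obtain ⟨R, rfl⟩ := exists_finsupp_support_eq K P
    exact (h R hP).merge_mem_support h₁ h₂ hZ

end

/-- The decomposition of every K-relation whose support satisfies the functional dependencies
in `F` along `X` and `Y` is lossless-join if and only if `F` logically implies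
`X ∩ Y → X ∖ Y` or `F` logically implies `X ∩ Y → Y ∖ X`. -/
theorem statement11 {A : Type*} [DecidableEq A] (dom : A → Type*) [∀ a : A, Nontrivial (dom a)]
    (K : Type*) [CommSemiring K] [Nontrivial K] [NoZeroDivisors K]
    (hplus : ∀ a b : K, a + b = 0 → a = 0 ∧ b = 0)
    (X Y : Finset A) (F : Set (Finset A × Finset A))
    (hF : ∀ fd ∈ F, fd.1 ⊆ X ∪ Y ∧ fd.2 ⊆ X ∪ Y) :
    ((∀ P : Finset (Tup dom (X ∪ Y)), (∀ fd ∈ F, SatisfiesFD P fd.1 fd.2) →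
        SatisfiesFD P (X ∩ Y) (X \ Y)) ∨
     (∀ P : Finset (Tup dom (X ∪ Y)), (∀ fd ∈ F, SatisfiesFD P fd.1 fd.2) →
        SatisfiesFD P (X ∩ Y) (Y \ X))) ↔
    (∀ R : Tup dom (X ∪ Y) →₀ K, (∀ fd ∈ F, SatisfiesFD R.support fd.1 fd.2) →
      KEquiv R (kjoin (marg Finset.subset_union_left R)
        (marg Finset.subset_union_right R))) :=
  statement11_general hplus X Y F
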